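/- Let S be a set and let u, d : 𝒫(S) → 𝒫(S) be a parallel pair of functions preserving arbitrary unions. Then there exists a unique relation R on S whose induced cones satisfy up_R = u and down_R = d (so relations on S correspond bijectively to union-preserving parallel pairs on 𝒫(S)). -/

import Mathlib

/-- The up cone of a relation: `upCone R A = {x | ∃ a ∈ A, a R x}`. -/
def upCone {S : Type*} (R : S → S → Prop) (A : Set S) : Set S := {x | ∃ a ∈ A, R a x}

/-- The down cone of a relation: `downCone R A = {x | ∃ a ∈ A, x R a}`. -/
def downCone {S : Type*} (R : S → S → Prop) (A : Set S) : Set S := {x | ∃ a ∈ A, R x a}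

/-- A pair of functions on a meet-semilattice is *parallel* if
`u x ⊓ y ≤ u (x ⊓ d y)` and `x ⊓ d y ≤ d (u x ⊓ y)` for all `x, y`. -/
def IsParallel {L : Type*} [SemilatticeInf L] (u d : L → L) : Prop :=
  ∀ x y : L, u x ⊓ y ≤ u (x ⊓ d y) ∧ x ⊓ d y ≤ d (u x ⊓ y)

/-!
A parallel pair with `u ⊥ = ⊥` and `d ⊥ = ⊥` is conjugate: `u x` is disjoint from `y` exactly when
`x` is disjoint from `d y`. On a powerset, taking one of the two sets to be a singleton turns
conjugacy into `x ∈ u A ↔ ∃ a ∈ A, a ∈ d {x}`, and dually for `d`. So both maps are determined by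
one relation, which relates `a` to `x` when `x ∈ u {a}`, equivalently when `a ∈ d {x}`.
-/

/-- Conjugate maps in the sense of Jónsson and Tarski, stated through disjointness so that no
complements are required: the order-theoretic form of "image and preimage under one relation". -/
def IsConjugate {L M : Type*} [PartialOrder L] [OrderBot L] [PartialOrder M] [OrderBot M]
    (u : L → M) (d : M → L) : Prop :=
  ∀ x y, Disjoint (u x) y ↔ Disjoint x (d y)

theorem IsParallel.isConjugate {L : Type*} [SemilatticeInf L] [OrderBot L] {u d : L → L}
    (h : IsParallel u d) (hu : u ⊥ = ⊥) (hd : d ⊥ = ⊥) : IsConjugate u d := by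
  intro x y
  constructor <;> intro hxy <;> rw [disjoint_iff_inf_le]
  · calc
      x ⊓ d y ≤ d (u x ⊓ y) := (h x y).2
      _ = ⊥ := by rw [hxy.eq_bot, hd]
  · calc
      u x ⊓ y ≤ u (x ⊓ d y) := (h x y).1
      _ = ⊥ := by rw [hxy.eq_bot, hu]

namespace IsConjugate

theorem symm {L M : Type*} [PartialOrder L] [OrderBot L] [PartialOrder M] [OrderBot M]
    {u : L → M} {d : M → L} (h : IsConjugate u d) : IsConjugate d u := fun y x => by
  rw [disjoint_comm, ← h x y, disjoint_comm]

theorem mem_apply_iff {S T : Type*} {u : Set S → Set T} {d : Set T → Set S}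
    (h : IsConjugate u d) {A : Set S} {x : T} : x ∈ u A ↔ ∃ a ∈ A, a ∈ d {x} := by
  rw [← Set.not_disjoint_iff, ← h A {x}, Set.disjoint_singleton_right, not_not]

theorem mem_apply_singleton_comm {S T : Type*} {u : Set S → Set T} {d : Set T → Set S}
    (h : IsConjugate u d) {a : S} {x : T} : x ∈ u {a} ↔ a ∈ d {x} := by
  simp [h.mem_apply_iff (A := {a})]

variable {S : Type*} {u d : Set S → Set S}

theorem upCone_eq (h : IsConjugate u d) : upCone (fun a x => x ∈ u {a}) = u := by
  ext A x
  simp only [upCone, Set.mem_ofPred_eq, h.mem_apply_singleton_comm, h.mem_apply_iff (A := A)]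

theorem downCone_eq (h : IsConjugate u d) : downCone (fun a x => x ∈ u {a}) = d := by
  ext A x
  exact h.symm.mem_apply_iff.symm

end IsConjugate

theorem mem_upCone_singleton {S : Type*} {R : S → S → Prop} {a x : S} :
    x ∈ upCone R {a} ↔ R a x := by
  simp [upCone]

theorem upCone_injective {S : Type*} :
    Function.Injective (upCone : (S → S → Prop) → Set S → Set S) := by
  intro R R' h
  ext a x
  rw [← mem_upCone_singleton (R := R), h, mem_upCone_singleton]

theorem exists_unique_relation_of_parallel_general {S : Type*} (u d : Set S → Set S)
    (hu : u ∅ = ∅) (hd : d ∅ = ∅) (hpar : IsParallel u d) :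
    ∃! R : S → S → Prop, upCone R = u ∧ downCone R = d := by
  have hconj : IsConjugate u d := hpar.isConjugate hu hd
  refine ⟨fun a x => x ∈ u {a}, ⟨hconj.upCone_eq, hconj.downCone_eq⟩, ?_⟩
  rintro R ⟨hR, -⟩
  exact upCone_injective (hR.trans hconj.upCone_eq.symm)

/-- A union-preserving parallel pair on a powerset comes from a unique relation. -/
theorem exists_unique_relation_of_parallel {S : Type*} (u d : Set S → Set S)
    (hu : ∀ 𝒮 : Set (Set S), u (⋃₀ 𝒮) = ⋃ A ∈ 𝒮, u A)
    (hd : ∀ 𝒮 : Set (Set S), d (⋃₀ 𝒮) = ⋃ A ∈ 𝒮, d A)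
    (hpar : IsParallel u d) :
    ∃! R : S → S → Prop, upCone R = u ∧ downCone R = d :=
  exists_unique_relation_of_parallel_general u d (by simpa using hu ∅) (by simpa using hd ∅) hpar
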